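/- arXiv:1802.02993 — 2 statements merged into one kernel-verified Lean document; each statement's English description precedes it below -/
import Mathlib

section
/- Let n = 1, so Ω = {(y_1,y_2) ∈ ℝ² : y_1 > 0, y_2 > 0, y_1 + y_2 < π/2} and F(y_1,y_2) = (cos(y_1+y_2)·sin y_1·sin y_2)^{1/2}. Define the three closed subsets of ℝ²: ℋ_0 = {x : x_1 ≥ 0, x_2 ≥ 0, x_1 x_2 ≤ 1/4}, ℋ_1 = {x : x_1 ≤ 0, x_2 − x_1 ≥ 0, (−x_1)(x_2 − x_1) ≤ 1/4}, ℋ_2 = {x : x_2 ≤ 0, x_1 − x_2 ≥ 0, (x_1 − x_2)(−x_2) ≤ 1/4}, and let ℋ = ℋ_0 ∪ ℋ_1 ∪ ℋ_2. Then the gradient map ∇F : Ω → ℝ² is injective, its image is exactly the topological interior of ℋ, and it is a local diffeomorphism at every point of Ω; hence ∇F is a diffeomorphism from Ω onto the interior of ℋ. -/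
open Real

/-!
Write `F = √(sin a sin b sin c)` with `a = y₁`, `b = y₂` and `c = π/2 - y₁ - y₂`. Then
`∇F = F / 2 • (cot a - cot c, cot b - cot c)`, and the Hessian of `F` is negative definite because
`cot a cot b cot c = cot a + cot b + cot c`. This gives injectivity on the convex set `Ω` and
invertibility of the derivative of `∇F`.

In terms of the triples `(x₁, x₂, 0)`, taken up to adding a constant to all three entries, `ℋ` is
invariant under permutations: it is given by `e₂ ≤ 1/4`, where `e₂` is the second elementary
symmetric polynomial of the triple shifted so that its smallest entry is `0`. For the image of a
point of `Ω` with largest angle `c` one gets `4 e₂ = sin (c - a) sin (c - b) / sin c < 1`.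
Conversely, if `e₂ < 1/4`, then near the appropriate vertex of the triangle `F - ⟨x, ·⟩` exceeds all
its boundary values, so its maximum over the closed triangle is an interior critical point.
-/

open Set Filter Topology

section General

@[elab_as_elim]
theorem forall_of_symm_of_rel_last {α : Type*} (r : α → α → Prop) [Std.Total r] [IsTrans α r]
    {p : α → α → α → Prop} (swap_left : ∀ a b c, p a b c → p b a c)
    (swap_right : ∀ a b c, p a b c → p a c b)
    (rel_last : ∀ a b c, r c a → r c b → p a b c) (a b c : α) : p a b c := by
  rcases total_of r a b with hab | hba
  · rcases total_of r a c with hac | hca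
    · exact swap_left _ _ _ (swap_right _ _ _ (rel_last b c a hab hac))
    · exact rel_last a b c hca (_root_.trans hca hab)
  · rcases total_of r b c with hbc | hcb
    · exact swap_right _ _ _ (rel_last a c b hba hbc)
    · exact rel_last a b c (_root_.trans hcb hba) hcb

theorem quadratic_form_pos {K : Type*} [Field K] [LinearOrder K] [IsStrictOrderedRing K]
    {a b c x y : K} (ha : 0 < a) (hdet : b ^ 2 < a * c) (hxy : (x, y) ≠ 0) :
    0 < a * x ^ 2 + 2 * b * x * y + c * y ^ 2 := by
  have complete_square : a * (a * x ^ 2 + 2 * b * x * y + c * y ^ 2) =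
      (a * x + b * y) ^ 2 + (a * c - b ^ 2) * y ^ 2 := by ring
  refine pos_of_mul_pos_right (complete_square ▸ ?_) ha.le
  rcases eq_or_ne y 0 with rfl | hy
  · have hx : x ≠ 0 := by rintro rfl; exact hxy rfl
    simp only [mul_zero, add_zero, ne_eq, OfNat.ofNat_ne_zero, not_false_eq_true, zero_pow]
    positivity
  · have := sub_pos.2 hdet
    positivity

theorem interior_setOf_le_of_homogeneous {E : Type*} [AddCommGroup E] [Module ℝ E]
    [TopologicalSpace E] [ContinuousSMul ℝ E] {f : E → ℝ} (hf : Continuous f) {n : ℕ} (hn : n ≠ 0)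
    (hom : ∀ t > 0, ∀ x, f (t • x) = t ^ n * f x) {r : ℝ} (hr : 0 < r) :
    interior {x | f x ≤ r} = {x | f x < r} := by
  refine Subset.antisymm (fun x hx ↦ ?_)
    (interior_maximal (fun x (hx : f x < r) ↦ hx.le) (isOpen_lt hf continuous_const))
  have tendsto_smul : Tendsto (fun t : ℝ ↦ t • x) (𝓝[>] 1) (𝓝 x) := by
    have hcont : Continuous fun t : ℝ ↦ t • x := by fun_prop
    exact (hcont.tendsto' 1 x (one_smul ℝ x)).mono_left nhdsWithin_le_nhds
  obtain ⟨t, htx : f (t • x) ≤ r, ht : 1 < t⟩ :=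
    ((tendsto_smul.eventually (mem_interior_iff_mem_nhds.1 hx)).and self_mem_nhdsWithin).exists
  rw [hom t (one_pos.trans ht)] at htx
  refine lt_of_not_ge fun hrx : r ≤ f x ↦ ?_
  have : r * 1 < r * t ^ n := (mul_lt_mul_iff_right₀ hr).2 (one_lt_pow₀ ht hn)
  nlinarith [mul_le_mul_of_nonneg_left hrx (pow_nonneg (one_pos.trans ht).le n)]

section Calculus

variable {E F : Type*} [NormedAddCommGroup E] [NormedSpace ℝ E] [NormedAddCommGroup F]
  [NormedSpace ℝ F]

theorem injOn_of_hasFDerivWithinAt_of_pairing_ne_zero (B : F →L[ℝ] E →L[ℝ] ℝ) {s : Set E}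
    (hs : Convex ℝ s) {g : E → F} {g' : E → E →L[ℝ] F}
    (hg : ∀ x ∈ s, HasFDerivWithinAt g (g' x) s x)
    (hB : ∀ x ∈ s, ∀ v, v ≠ 0 → B (g' x v) v ≠ 0) : InjOn g s := by
  intro x hx y hy hxy
  by_contra hne
  have hderiv : ∀ z ∈ s,
      HasFDerivWithinAt (fun z ↦ B (g z) (y - x)) (B.flip (y - x) ∘L g' z) s z :=
    fun z hz ↦ (B.flip (y - x)).hasFDerivAt.comp_hasFDerivWithinAt z (hg z hz)
  obtain ⟨z, hz, hmean⟩ := domain_mvt hderiv hs hx hy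
  exact hB z (hs.segment_subset hx hy hz) (y - x) (sub_ne_zero.2 (Ne.symm hne))
    (hmean.symm.trans (by rw [hxy, sub_self]))

theorem exists_continuousLinearEquiv_of_pairing_ne_zero [FiniteDimensional ℝ E]
    (B : E →L[ℝ] E →L[ℝ] ℝ) (f : E →L[ℝ] E) (hB : ∀ v, v ≠ 0 → B (f v) v ≠ 0) :
    ∃ e : E ≃L[ℝ] E, (e : E →L[ℝ] E) = f := by
  have f_injective : Function.Injective (f : E →ₗ[ℝ] E) := by
    refine (injective_iff_map_eq_zero _).2 fun v hv ↦ ?_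
    by_contra hne
    exact hB v hne (by simp [show f v = 0 from hv])
  exact ⟨(LinearEquiv.ofInjectiveEndo _ f_injective).toContinuousLinearEquiv, by ext; rfl⟩

theorem exists_fderiv_eq_of_lt_on_diff {f : E → ℝ} {s t : Set E} (ht : IsCompact t)
    (hs : IsOpen s) (hst : s ⊆ t) (hcont : ContinuousOn f t) (hdiff : DifferentiableOn ℝ f s)
    (l : E →L[ℝ] ℝ) {z : E} (hz : z ∈ t) (hlt : ∀ w ∈ t \ s, f w - l w < f z - l z) :
    ∃ x ∈ s, fderiv ℝ f x = l := by
  obtain ⟨x, hx, hmax⟩ :=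
    ht.exists_isLocalMax_mem_open hst (hcont.sub l.continuous.continuousOn) hz hlt hs
  have hderiv := (hdiff.differentiableAt (hs.mem_nhds hx)).hasFDerivAt.sub l.hasFDerivAt
  exact ⟨x, hx, sub_eq_zero.1 (hmax.hasFDerivAt_eq_zero hderiv)⟩

end Calculus

end General

section ShiftedEsymm

/-- The second elementary symmetric polynomial of `u - m`, `v - m`, `w - m`, where `m` is the
minimum of `u`, `v`, `w`. One of these differences is zero, so this is the product of the other two.
It is the gauge whose sublevel set `{x | shiftedEsymm x.1 x.2 0 ≤ 1 / 4}` is `ℋ`. -/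
def shiftedEsymm (u v w : ℝ) : ℝ :=
  let m := min u (min v w)
  (u - m) * (v - m) + (v - m) * (w - m) + (w - m) * (u - m)

theorem shiftedEsymm_left_comm (u v w : ℝ) : shiftedEsymm u v w = shiftedEsymm v u w := by
  simp only [shiftedEsymm, min_left_comm u v w]
  ring

theorem shiftedEsymm_right_comm (u v w : ℝ) : shiftedEsymm u v w = shiftedEsymm u w v := by
  simp only [shiftedEsymm, min_comm v w]
  ring

theorem shiftedEsymm_of_le {u v w : ℝ} (hu : w ≤ u) (hv : w ≤ v) :
    shiftedEsymm u v w = (u - w) * (v - w) := by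
  simp only [shiftedEsymm, min_eq_right hv, min_eq_right hu]
  ring

theorem shiftedEsymm_mul {t : ℝ} (ht : 0 ≤ t) (u v w : ℝ) :
    shiftedEsymm (t * u) (t * v) (t * w) = t ^ 2 * shiftedEsymm u v w := by
  simp only [shiftedEsymm, ← mul_min_of_nonneg _ _ ht]
  ring

theorem shiftedEsymm_sub (u v w k : ℝ) :
    shiftedEsymm (u - k) (v - k) (w - k) = shiftedEsymm u v w := by
  simp only [shiftedEsymm, min_sub_sub_right]
  ring

theorem setOf_shiftedEsymm_le_eq_union (r : ℝ) :
    {x : ℝ × ℝ | shiftedEsymm x.1 x.2 0 ≤ r} =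
      {x | 0 ≤ x.1 ∧ 0 ≤ x.2 ∧ x.1 * x.2 ≤ r} ∪
      {x | x.1 ≤ 0 ∧ 0 ≤ x.2 - x.1 ∧ (-x.1) * (x.2 - x.1) ≤ r} ∪
      {x | x.2 ≤ 0 ∧ 0 ≤ x.1 - x.2 ∧ (x.1 - x.2) * (-x.2) ≤ r} := by
  have zero_min {u v : ℝ} (hu : 0 ≤ u) (hv : 0 ≤ v) : shiftedEsymm u v 0 = u * v := by
    rw [shiftedEsymm_of_le hu hv, sub_zero, sub_zero]
  have fst_min {u v : ℝ} (hu : u ≤ 0) (huv : 0 ≤ v - u) :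
      shiftedEsymm u v 0 = (-u) * (v - u) := by
    rw [shiftedEsymm_left_comm, shiftedEsymm_right_comm,
      shiftedEsymm_of_le (sub_nonneg.1 huv) hu, zero_sub, mul_comm]
  have snd_min {u v : ℝ} (hv : v ≤ 0) (huv : 0 ≤ u - v) :
      shiftedEsymm u v 0 = (u - v) * (-v) := by
    rw [shiftedEsymm_right_comm, shiftedEsymm_of_le (sub_nonneg.1 huv) hv, zero_sub]
  ext ⟨u, v⟩
  simp only [mem_union, mem_ofPred_eq]
  constructor
  · intro h
    have sectors : (0 ≤ u ∧ 0 ≤ v) ∨ (u ≤ 0 ∧ 0 ≤ v - u) ∨ (v ≤ 0 ∧ 0 ≤ u - v) := by grind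
    rcases sectors with ⟨hu, hv⟩ | ⟨hu, huv⟩ | ⟨hv, huv⟩
    · exact .inl (.inl ⟨hu, hv, zero_min hu hv ▸ h⟩)
    · exact .inl (.inr ⟨hu, huv, fst_min hu huv ▸ h⟩)
    · exact .inr ⟨hv, huv, snd_min hv huv ▸ h⟩
  · rintro ((⟨hu, hv, h⟩ | ⟨hu, huv, h⟩) | ⟨hv, huv, h⟩)
    · exact (zero_min hu hv).trans_le h
    · exact (fst_min hu huv).trans_le h
    · exact (snd_min hv huv).trans_le h

theorem interior_setOf_shiftedEsymm_le {r : ℝ} (hr : 0 < r) :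
    interior {x : ℝ × ℝ | shiftedEsymm x.1 x.2 0 ≤ r} = {x | shiftedEsymm x.1 x.2 0 < r} := by
  refine interior_setOf_le_of_homogeneous (by unfold shiftedEsymm; fun_prop) two_ne_zero
    (fun t ht x ↦ ?_) hr
  simpa using shiftedEsymm_mul ht.le x.1 x.2 0

end ShiftedEsymm

section Trigonometry

theorem hasDerivAt_cot {x : ℝ} (hx : sin x ≠ 0) : HasDerivAt cot (-(1 + cot x ^ 2)) x := by
  rw [funext cot_eq_cos_div_sin]
  refine ((hasDerivAt_cos x).div (hasDerivAt_sin x) hx).congr_deriv ?_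
  field_simp
  ring

theorem hasDerivAt_tan_one_add_tan_sq {x : ℝ} (hx : cos x ≠ 0) :
    HasDerivAt tan (1 + tan x ^ 2) x := by
  refine (hasDerivAt_tan hx).congr_deriv ?_
  rw [← inv_one_add_tan_sq hx, one_div, inv_inv]

theorem cot_pos_of_pos_of_lt_pi_div_two {x : ℝ} (h0 : 0 < x) (hpi : x < π / 2) : 0 < cot x := by
  rw [← tan_inv_eq_cot]
  exact inv_pos.2 (tan_pos_of_pos_of_lt_pi_div_two h0 hpi)

theorem cot_pi_div_two_sub (x : ℝ) : cot (π / 2 - x) = tan x := by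
  rw [← tan_inv_eq_cot, tan_pi_div_two_sub, inv_inv]

theorem cot_mul_cot_mul_tan_add {a b : ℝ} (ha : sin a ≠ 0) (hb : sin b ≠ 0)
    (hab : cos (a + b) ≠ 0) :
    cot a * cot b * tan (a + b) = cot a + cot b + tan (a + b) := by
  rw [cot_eq_cos_div_sin, cot_eq_cos_div_sin, tan_eq_sin_div_cos]
  field_simp
  rw [sin_add, cos_add]
  ring

theorem sin_mul_sin_mul_cot_sub_cot {a c : ℝ} (ha : sin a ≠ 0) (hc : sin c ≠ 0) :
    sin a * sin c * (cot a - cot c) = sin (c - a) := by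
  rw [cot_eq_cos_div_sin, cot_eq_cos_div_sin, sin_sub]
  field_simp

theorem cot_le_cot_of_le {a c : ℝ} (ha : 0 < a) (hac : a ≤ c) (hc : c < π) : cot c ≤ cot a := by
  have sin_a_pos := sin_pos_of_pos_of_lt_pi ha (hac.trans_lt hc)
  have sin_c_pos := sin_pos_of_pos_of_lt_pi (ha.trans_le hac) hc
  have sin_sub_nonneg : 0 ≤ sin (c - a) :=
    sin_nonneg_of_nonneg_of_le_pi (by linarith) (by linarith)
  rw [← sin_mul_sin_mul_cot_sub_cot sin_a_pos.ne' sin_c_pos.ne'] at sin_sub_nonneg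
  exact sub_nonneg.1 (nonneg_of_mul_nonneg_right sin_sub_nonneg (by positivity))

theorem sin_mul_cot_sub_mul_cot_sub_lt_one {a b c : ℝ} (ha : 0 < a) (hb : 0 < b) (hac : a ≤ c)
    (hbc : b ≤ c) (hc : c ≤ π / 2) :
    sin a * sin b * sin c * ((cot a - cot c) * (cot b - cot c)) < 1 := by
  have sin_a_pos : 0 < sin a := sin_pos_of_pos_of_lt_pi ha (by linarith [pi_pos])
  have sin_b_pos : 0 < sin b := sin_pos_of_pos_of_lt_pi hb (by linarith [pi_pos])
  have sin_c_pos : 0 < sin c := sin_pos_of_pos_of_lt_pi (by linarith) (by linarith [pi_pos])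
  have sin_sub_nonneg : 0 ≤ sin (c - a) :=
    sin_nonneg_of_nonneg_of_le_pi (by linarith) (by linarith [pi_pos])
  have sin_sub_lt : sin (c - a) < sin c :=
    sin_lt_sin_of_lt_of_le_pi_div_two (by linarith [pi_pos]) hc (by linarith)
  refine lt_of_mul_lt_mul_left ?_ sin_c_pos.le
  calc sin c * (sin a * sin b * sin c * ((cot a - cot c) * (cot b - cot c)))
      = (sin a * sin c * (cot a - cot c)) * (sin b * sin c * (cot b - cot c)) := by ring
    _ = sin (c - a) * sin (c - b) := by
      rw [sin_mul_sin_mul_cot_sub_cot sin_a_pos.ne' sin_c_pos.ne',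
        sin_mul_sin_mul_cot_sub_cot sin_b_pos.ne' sin_c_pos.ne']
    _ ≤ sin (c - a) := mul_le_of_le_one_right sin_sub_nonneg (sin_le_one _)
    _ < sin c * 1 := by rwa [mul_one]

theorem sin_mul_shiftedEsymm_cot_lt_one (a b c : ℝ) (ha : a ∈ Ioc 0 (π / 2))
    (hb : b ∈ Ioc 0 (π / 2)) (hc : c ∈ Ioc 0 (π / 2)) :
    sin a * sin b * sin c * shiftedEsymm (cot a) (cot b) (cot c) < 1 := by
  revert ha hb hc
  refine forall_of_symm_of_rel_last (· ≥ ·) (fun a b c h hb ha hc ↦ ?_)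
    (fun a b c h ha hc hb ↦ ?_) (fun a b c hac hbc ha hb hc ↦ ?_) a b c
  · rw [shiftedEsymm_left_comm, mul_comm (sin _) (sin a)]
    exact h ha hb hc
  · rw [shiftedEsymm_right_comm, mul_right_comm (sin a)]
    exact h ha hb hc
  · have hc_lt_pi : c < π := hc.2.trans_lt (half_lt_self pi_pos)
    rw [shiftedEsymm_of_le (cot_le_cot_of_le ha.1 hac hc_lt_pi)
      (cot_le_cot_of_le hb.1 hbc hc_lt_pi)]
    exact sin_mul_cot_sub_mul_cot_sub_lt_one ha.1 hb.1 hac hbc hc.2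

theorem sin_eq_mul_sinc (x : ℝ) : sin x = x * sinc x := by
  rcases eq_or_ne x 0 with rfl | hx
  · simp
  · rw [sinc_of_ne_zero hx, mul_div_cancel₀ _ hx]

theorem eventually_mul_lt_sin_mul_sin_mul_cos {k p q : ℝ} (hk : k < 1) (hp : 0 < p) (hq : 0 < q) :
    ∀ᶠ e in 𝓝[>] (0 : ℝ), k * (p * e * (q * e)) <
      sin (p * e) * sin (q * e) * cos (p * e + q * e) := by
  have tendsto_one : Tendsto (fun e ↦ sinc (p * e) * sinc (q * e) * cos (p * e + q * e))
      (𝓝 0) (𝓝 1) := by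
    have hcont : Continuous fun e ↦ sinc (p * e) * sinc (q * e) * cos (p * e + q * e) := by
      fun_prop
    simpa using hcont.tendsto 0
  filter_upwards [nhdsWithin_le_nhds (tendsto_one.eventually_const_lt hk), self_mem_nhdsWithin]
    with e hke (he : 0 < e)
  calc k * (p * e * (q * e))
      < sinc (p * e) * sinc (q * e) * cos (p * e + q * e) * (p * e * (q * e)) := by gcongr
    _ = sin (p * e) * sin (q * e) * cos (p * e + q * e) := by
      rw [sin_eq_mul_sinc (p * e), sin_eq_mul_sinc (q * e)]
      ring

/-- Along the ray `(a, b) = e • (q', p')` with `p'`, `q'` slightly larger than `p`, `q`, the left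
side is at most `2 p' q' e`, while the square root is asymptotic to `√(p' q') e`. -/
theorem exists_add_lt_sqrt_sin_mul_sin_mul_cos {p q : ℝ} (hp : 0 ≤ p) (hq : 0 ≤ q)
    (hpq : p * q < 1 / 4) :
    ∃ a b, 0 < a ∧ 0 < b ∧ a + b < π / 2 ∧
      p * a + q * b < √(sin a * sin b * cos (a + b)) := by
  obtain ⟨p', hpp', q', hqq', hpq'⟩ : ∃ p' > p, ∃ q' > q, p' * q' < 1 / 4 := by
    by_contra! h
    exact hpq.not_ge (le_mul_of_forall_lt₀ h)
  have hp' : 0 < p' := hp.trans_lt hpp'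
  have hq' : 0 < q' := hq.trans_lt hqq'
  have small : ∀ᶠ e in 𝓝[>] (0 : ℝ), q' * e + p' * e < π / 2 := by
    have hcont : Continuous fun e : ℝ ↦ q' * e + p' * e := by fun_prop
    exact nhdsWithin_le_nhds (hcont.tendsto' 0 0 (by simp) |>.eventually_lt_const (by positivity))
  obtain ⟨e, ⟨hsin, hsmall⟩, he : 0 < e⟩ :=
    ((eventually_mul_lt_sin_mul_sin_mul_cos (by linarith : 4 * (p' * q') < 1) hq' hp').and
      small |>.and self_mem_nhdsWithin).exists
  refine ⟨q' * e, p' * e, by positivity, by positivity, hsmall, ?_⟩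
  calc p * (q' * e) + q * (p' * e) ≤ p' * (q' * e) + q' * (p' * e) := by gcongr
    _ < √(sin (q' * e) * sin (p' * e) * cos (q' * e + p' * e)) :=
      lt_sqrt_of_sq_lt (lt_of_eq_of_lt (by ring) hsin)

theorem exists_add_add_lt_sqrt_sin_mul_sin_mul_sin (u v w : ℝ) (h : shiftedEsymm u v w < 1 / 4) :
    ∃ a b c, 0 < a ∧ 0 < b ∧ 0 < c ∧ a + b + c = π / 2 ∧
      u * a + v * b + w * c < √(sin a * sin b * sin c) + min u (min v w) * (π / 2) := by
  revert h
  refine forall_of_symm_of_rel_last (· ≤ ·) (fun u v w ih h ↦ ?_) (fun u v w ih h ↦ ?_)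
    (fun u v w hu hv h ↦ ?_) u v w
  · obtain ⟨a, b, c, ha, hb, hc, hsum, hlt⟩ := ih (shiftedEsymm_left_comm u v w ▸ h)
    refine ⟨b, a, c, hb, ha, hc, by linarith, ?_⟩
    rw [min_left_comm, mul_comm (sin b)]
    linarith
  · obtain ⟨a, b, c, ha, hb, hc, hsum, hlt⟩ := ih (shiftedEsymm_right_comm u v w ▸ h)
    refine ⟨a, c, b, ha, hc, hb, by linarith, ?_⟩
    rw [min_comm w v, mul_right_comm]
    linarith
  · rw [shiftedEsymm_of_le hu hv] at h
    obtain ⟨a, b, ha, hb, hab, hlt⟩ :=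
      exists_add_lt_sqrt_sin_mul_sin_mul_cos (sub_nonneg.2 hu) (sub_nonneg.2 hv) h
    refine ⟨a, b, π / 2 - (a + b), ha, hb, by linarith, by ring, ?_⟩
    rw [sin_pi_div_two_sub, min_eq_right hv, min_eq_right hu]
    linarith

end Trigonometry

section Potential

/-- The standard dot product of `ℝ × ℝ`, identifying `ℝ × ℝ` with its dual. -/
noncomputable def dotProd : ℝ × ℝ →L[ℝ] ℝ × ℝ →L[ℝ] ℝ :=
  (ContinuousLinearMap.fst ℝ ℝ ℝ).smulRight (ContinuousLinearMap.fst ℝ ℝ ℝ) +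
    (ContinuousLinearMap.snd ℝ ℝ ℝ).smulRight (ContinuousLinearMap.snd ℝ ℝ ℝ)

@[simp]
theorem dotProd_apply (p v : ℝ × ℝ) : dotProd p v = p.1 * v.1 + p.2 * v.2 := rfl

theorem dotProd_injective : Function.Injective dotProd := by
  intro p q h
  have h₁ := congr($h (1, 0))
  have h₂ := congr($h (0, 1))
  simp only [dotProd_apply, mul_one, mul_zero, add_zero, zero_add] at h₁ h₂
  exact Prod.ext h₁ h₂

/-- The open triangle `Ω`. -/
def openTriangle : Set (ℝ × ℝ) := {y | 0 < y.1 ∧ 0 < y.2 ∧ y.1 + y.2 < π / 2}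

/-- The closure of `openTriangle`, on which `F` is maximized. -/
def closedTriangle : Set (ℝ × ℝ) := {y | 0 ≤ y.1 ∧ 0 ≤ y.2 ∧ y.1 + y.2 ≤ π / 2}

/-- The function `F`, with the real square root in place of the power `1 / 2`. -/
noncomputable def potential (y : ℝ × ℝ) : ℝ := √(sin y.1 * sin y.2 * cos (y.1 + y.2))

/-- The gradient of `potential` on `openTriangle`. -/
noncomputable def potentialGrad (y : ℝ × ℝ) : ℝ × ℝ :=
  (potential y / 2 * (cot y.1 - tan (y.1 + y.2)), potential y / 2 * (cot y.2 - tan (y.1 + y.2)))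

/-- The Hessian of `potential` on `openTriangle`, as the derivative of `potentialGrad`. -/
noncomputable def potentialHess (y : ℝ × ℝ) : ℝ × ℝ →L[ℝ] ℝ × ℝ :=
  let A := cot y.1
  let B := cot y.2
  let C := tan (y.1 + y.2)
  (-(potential y / 4)) • (dotProd (4 + (A + C) ^ 2, 2 + C ^ 2 + A * C + B * C - A * B)).prod
    (dotProd (2 + C ^ 2 + A * C + B * C - A * B, 4 + (B + C) ^ 2))

theorem openTriangle_subset_closedTriangle : openTriangle ⊆ closedTriangle :=
  fun _ ⟨h₁, h₂, h₃⟩ ↦ ⟨h₁.le, h₂.le, h₃.le⟩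

theorem isOpen_openTriangle : IsOpen openTriangle :=
  (isOpen_lt continuous_const continuous_fst).inter
    ((isOpen_lt continuous_const continuous_snd).inter
      (isOpen_lt (continuous_fst.add continuous_snd) continuous_const))

theorem convex_openTriangle : Convex ℝ openTriangle :=
  (convex_halfSpace_gt (ContinuousLinearMap.fst ℝ ℝ ℝ).isLinear 0).inter
    ((convex_halfSpace_gt (ContinuousLinearMap.snd ℝ ℝ ℝ).isLinear 0).inter
      (convex_halfSpace_lt
        (ContinuousLinearMap.fst ℝ ℝ ℝ + ContinuousLinearMap.snd ℝ ℝ ℝ).isLinear (π / 2)))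

theorem isCompact_closedTriangle : IsCompact closedTriangle := by
  have isClosed_closedTriangle : IsClosed closedTriangle :=
    (isClosed_le continuous_const continuous_fst).inter
      ((isClosed_le continuous_const continuous_snd).inter
        (isClosed_le (continuous_fst.add continuous_snd) continuous_const))
  refine (isCompact_Icc (a := (0, 0)) (b := (π / 2, π / 2))).of_isClosed_subset
    isClosed_closedTriangle fun y ⟨h₁, h₂, h₃⟩ ↦ ?_
  exact ⟨⟨h₁, h₂⟩, ⟨by linarith, by linarith⟩⟩

theorem continuous_potential : Continuous potential := by
  unfold potential
  fun_prop

theorem potential_eq_zero_of_mem_diff {y : ℝ × ℝ} (hy : y ∈ closedTriangle \ openTriangle) :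
    potential y = 0 := by
  obtain ⟨⟨h₁, h₂, h₃⟩, hnot⟩ := hy
  have on_side : y.1 = 0 ∨ y.2 = 0 ∨ y.1 + y.2 = π / 2 := by
    by_contra! hne
    exact hnot ⟨h₁.lt_of_ne' hne.1, h₂.lt_of_ne' hne.2.1, h₃.lt_of_ne hne.2.2⟩
  unfold potential
  rcases on_side with h | h | h <;> simp [h]

section OpenTriangle

variable {y : ℝ × ℝ}

theorem sin_fst_pos (hy : y ∈ openTriangle) : 0 < sin y.1 :=
  sin_pos_of_pos_of_lt_pi hy.1 (by linarith [hy.2.1, hy.2.2, pi_pos])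

theorem sin_snd_pos (hy : y ∈ openTriangle) : 0 < sin y.2 :=
  sin_pos_of_pos_of_lt_pi hy.2.1 (by linarith [hy.1, hy.2.2, pi_pos])

theorem cos_fst_add_snd_pos (hy : y ∈ openTriangle) : 0 < cos (y.1 + y.2) :=
  cos_pos_of_mem_Ioo ⟨by linarith [hy.1, hy.2.1, pi_pos], hy.2.2⟩

theorem sin_mul_sin_mul_cos_pos (hy : y ∈ openTriangle) :
    0 < sin y.1 * sin y.2 * cos (y.1 + y.2) :=
  mul_pos (mul_pos (sin_fst_pos hy) (sin_snd_pos hy)) (cos_fst_add_snd_pos hy)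

theorem potential_pos (hy : y ∈ openTriangle) : 0 < potential y :=
  sqrt_pos.2 (sin_mul_sin_mul_cos_pos hy)

theorem potential_sq (hy : y ∈ openTriangle) :
    potential y ^ 2 = sin y.1 * sin y.2 * cos (y.1 + y.2) :=
  sq_sqrt (sin_mul_sin_mul_cos_pos hy).le

theorem hasFDerivAt_potential (hy : y ∈ openTriangle) :
    HasFDerivAt potential (dotProd (potentialGrad y)) y := by
  have sin_fst_ne := (sin_fst_pos hy).ne'
  have sin_snd_ne := (sin_snd_pos hy).ne'
  have cos_ne := (cos_fst_add_snd_pos hy).ne'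
  have potential_ne := (potential_pos hy).ne'
  have hderiv := ((hasFDerivAt_fst.sin.mul hasFDerivAt_snd.sin).mul
    (hasFDerivAt_fst.add hasFDerivAt_snd).cos).sqrt (sin_mul_sin_mul_cos_pos hy).ne'
  refine hderiv.congr_fderiv (ContinuousLinearMap.ext fun v ↦ ?_)
  change 1 / (2 * potential y) * (sin y.1 * sin y.2 * (-sin (y.1 + y.2) * (v.1 + v.2)) +
    cos (y.1 + y.2) * (sin y.1 * (cos y.2 * v.2) + sin y.2 * (cos y.1 * v.1))) = _
  simp only [potentialGrad, cot_eq_cos_div_sin, tan_eq_sin_div_cos, dotProd_apply]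
  field_simp
  rw [potential_sq hy]
  ring

theorem hasFDerivAt_potentialGrad (hy : y ∈ openTriangle) :
    HasFDerivAt potentialGrad (potentialHess y) y := by
  have hF := (hasFDerivAt_potential hy).mul_const (1 / 2)
  have hfst : HasFDerivAt (fun z : ℝ × ℝ ↦ z.1) (.fst ℝ ℝ ℝ) y := hasFDerivAt_fst
  have hsnd : HasFDerivAt (fun z : ℝ × ℝ ↦ z.2) (.snd ℝ ℝ ℝ) y := hasFDerivAt_snd
  have hA := (hasDerivAt_cot (sin_fst_pos hy).ne').comp_hasFDerivAt y hfst
  have hB := (hasDerivAt_cot (sin_snd_pos hy).ne').comp_hasFDerivAt y hsnd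
  have hsum : HasFDerivAt (fun z : ℝ × ℝ ↦ z.1 + z.2) _ y := hfst.add hsnd
  have hC := (hasDerivAt_tan_one_add_tan_sq (cos_fst_add_snd_pos hy).ne').comp_hasFDerivAt y hsum
  have hderiv := (hF.mul (hA.sub hC)).prodMk (hF.mul (hB.sub hC))
  refine (hderiv.congr_fderiv (ContinuousLinearMap.ext fun v ↦ ?_)).congr_of_eventuallyEq
    (.of_forall fun z ↦ ?_)
  · simp only [potentialHess, potentialGrad, dotProd_apply, smul_apply, add_apply, sub_apply,
      Pi.sub_apply, Function.comp_apply, ContinuousLinearMap.prod_apply,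
      ContinuousLinearMap.coe_fst', ContinuousLinearMap.coe_snd', Prod.smul_mk, smul_eq_mul]
    refine Prod.ext ?_ ?_ <;> ring
  · simp [potentialGrad, div_eq_mul_inv]

theorem potentialHess_det_pos (hy : y ∈ openTriangle) :
    (2 + tan (y.1 + y.2) ^ 2 + cot y.1 * tan (y.1 + y.2) + cot y.2 * tan (y.1 + y.2) -
      cot y.1 * cot y.2) ^ 2 <
      (4 + (cot y.1 + tan (y.1 + y.2)) ^ 2) * (4 + (cot y.2 + tan (y.1 + y.2)) ^ 2) := by
  have cot_identity := cot_mul_cot_mul_tan_add (sin_fst_pos hy).ne' (sin_snd_pos hy).ne'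
    (cos_fst_add_snd_pos hy).ne'
  obtain ⟨h₁, h₂, h₃⟩ := hy
  have cot_fst_pos := cot_pos_of_pos_of_lt_pi_div_two h₁ (by linarith)
  have cot_snd_pos := cot_pos_of_pos_of_lt_pi_div_two h₂ (by linarith)
  have tan_pos := tan_pos_of_pos_of_lt_pi_div_two (by linarith) h₃
  generalize cot y.1 = A at *
  generalize cot y.2 = B at *
  generalize tan (y.1 + y.2) = C at *
  have det_eq : (4 + (A + C) ^ 2) * (4 + (B + C) ^ 2) - (2 + C ^ 2 + A * C + B * C - A * B) ^ 2 =
      4 * (3 + 2 * (A ^ 2 + B ^ 2 + C ^ 2) + 3 * (A * B + B * C + C * A)) := by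
    linear_combination 4 * (A + B + C) * cot_identity
  exact sub_pos.1 (det_eq ▸ by positivity)

theorem dotProd_potentialHess_neg (hy : y ∈ openTriangle) {v : ℝ × ℝ} (hv : v ≠ 0) :
    dotProd (potentialHess y v) v < 0 := by
  have form_pos := quadratic_form_pos (by positivity) (potentialHess_det_pos hy) hv
  refine (Eq.trans ?_ (neg_mul (potential y / 4) _)).trans_lt
    (neg_neg_of_pos (mul_pos (by linarith [potential_pos hy]) form_pos))
  simp only [potentialHess, dotProd_apply, smul_apply, ContinuousLinearMap.prod_apply,
    Prod.smul_mk, smul_eq_mul]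
  ring

theorem shiftedEsymm_potentialGrad_lt (hy : y ∈ openTriangle) :
    shiftedEsymm (potentialGrad y).1 (potentialGrad y).2 0 < 1 / 4 := by
  let c := π / 2 - (y.1 + y.2)
  obtain ⟨h₁, h₂, h₃⟩ := id hy
  have product_lt : potential y ^ 2 * shiftedEsymm (cot y.1) (cot y.2) (cot c) < 1 := by
    rw [potential_sq hy, ← sin_pi_div_two_sub]
    exact sin_mul_shiftedEsymm_cot_lt_one y.1 y.2 c ⟨h₁, by linarith⟩ ⟨h₂, by linarith⟩
      ⟨sub_pos.2 h₃, sub_le_self _ (by linarith)⟩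
  calc shiftedEsymm (potentialGrad y).1 (potentialGrad y).2 0
      = (potential y / 2) ^ 2 * shiftedEsymm (cot y.1) (cot y.2) (cot c) := by
        rw [← shiftedEsymm_sub (cot y.1) (cot y.2) (cot c) (cot c), cot_pi_div_two_sub,
          ← shiftedEsymm_mul (half_pos (potential_pos hy)).le, sub_self, mul_zero, potentialGrad]
    _ < 1 / 4 := by linarith

end OpenTriangle

theorem exists_potential_sub_lt_of_shiftedEsymm_lt {x : ℝ × ℝ}
    (hx : shiftedEsymm x.1 x.2 0 < 1 / 4) :
    ∃ z ∈ openTriangle, ∀ w ∈ closedTriangle \ openTriangle,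
      potential w - dotProd x w < potential z - dotProd x z := by
  obtain ⟨a, b, c, ha, hb, hc, hsum, hlt⟩ := exists_add_add_lt_sqrt_sin_mul_sin_mul_sin _ _ _ hx
  refine ⟨(a, b), ⟨ha, hb, by simp only; linarith⟩, fun w hw ↦ ?_⟩
  set m := min x.1 (min x.2 0)
  have m_le_fst : m ≤ x.1 := min_le_left _ _
  have m_le_snd : m ≤ x.2 := (min_le_right _ _).trans (min_le_left _ _)
  have m_nonpos : m ≤ 0 := (min_le_right _ _).trans (min_le_right _ _)
  have potential_eq : potential (a, b) = √(sin a * sin b * sin c) := by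
    rw [potential, ← sin_pi_div_two_sub, ← hsum, add_sub_cancel_left]
  obtain ⟨hw₁, hw₂, hw₃⟩ := hw.1
  calc potential w - dotProd x w = -(x.1 * w.1 + x.2 * w.2) := by
        rw [potential_eq_zero_of_mem_diff hw, dotProd_apply, zero_sub]
    _ ≤ -(m * (π / 2)) := by
        nlinarith [mul_nonneg (sub_nonneg.2 m_le_fst) hw₁, mul_nonneg (sub_nonneg.2 m_le_snd) hw₂,
          mul_nonneg (neg_nonneg.2 m_nonpos) (sub_nonneg.2 hw₃)]
    _ < potential (a, b) - dotProd x (a, b) := by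
        rw [potential_eq, dotProd_apply]
        linarith

theorem injOn_potentialGrad : InjOn potentialGrad openTriangle :=
  injOn_of_hasFDerivWithinAt_of_pairing_ne_zero dotProd convex_openTriangle
    (fun _ hy ↦ (hasFDerivAt_potentialGrad hy).hasFDerivWithinAt)
    fun _ hy _ hv ↦ (dotProd_potentialHess_neg hy hv).ne

theorem image_potentialGrad_openTriangle :
    potentialGrad '' openTriangle = {x | shiftedEsymm x.1 x.2 0 < 1 / 4} := by
  refine Subset.antisymm (image_subset_iff.2 fun y hy ↦ shiftedEsymm_potentialGrad_lt hy)
    fun x hx ↦ ?_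
  obtain ⟨z, hz, hlt⟩ := exists_potential_sub_lt_of_shiftedEsymm_lt hx
  obtain ⟨y, hy, hfderiv⟩ := exists_fderiv_eq_of_lt_on_diff isCompact_closedTriangle
    isOpen_openTriangle openTriangle_subset_closedTriangle continuous_potential.continuousOn
    (fun y hy ↦ (hasFDerivAt_potential hy).differentiableAt.differentiableWithinAt)
    (dotProd x) (openTriangle_subset_closedTriangle hz) hlt
  exact ⟨y, hy, dotProd_injective ((hasFDerivAt_potential hy).fderiv.symm.trans hfderiv)⟩

end Potential

theorem stmt_10
    (Ω : Set (ℝ × ℝ))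
    (hΩ : Ω = {y | 0 < y.1 ∧ 0 < y.2 ∧ y.1 + y.2 < π/2})
    (F : ℝ × ℝ → ℝ)
    (hF : ∀ y, F y = (cos (y.1 + y.2) * sin y.1 * sin y.2) ^ ((1:ℝ)/2))
    (g : ℝ × ℝ → ℝ × ℝ)
    (hg : ∀ y, g y = (fderiv ℝ F y (1, 0), fderiv ℝ F y (0, 1)))
    (H₀ H₁ H₂ : Set (ℝ × ℝ))
    (hH₀ : H₀ = {x | 0 ≤ x.1 ∧ 0 ≤ x.2 ∧ x.1 * x.2 ≤ 1/4})
    (hH₁ : H₁ = {x | x.1 ≤ 0 ∧ 0 ≤ x.2 - x.1 ∧ (-x.1) * (x.2 - x.1) ≤ 1/4})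
    (hH₂ : H₂ = {x | x.2 ≤ 0 ∧ 0 ≤ x.1 - x.2 ∧ (x.1 - x.2) * (-x.2) ≤ 1/4}) :
    Set.InjOn g Ω ∧
    g '' Ω = interior (H₀ ∪ H₁ ∪ H₂) ∧
    ∀ y ∈ Ω, ∃ e : (ℝ × ℝ) ≃L[ℝ] (ℝ × ℝ),
      HasFDerivAt g (e : (ℝ × ℝ) →L[ℝ] (ℝ × ℝ)) y := by
  obtain rfl : Ω = openTriangle := hΩ
  obtain rfl : F = potential := funext fun y ↦ by
    rw [hF, potential, sqrt_eq_rpow, mul_rotate]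
  have g_eqOn : EqOn g potentialGrad openTriangle := fun y hy ↦ by
    rw [hg, (hasFDerivAt_potential hy).fderiv]
    simp
  rw [hH₀, hH₁, hH₂, ← setOf_shiftedEsymm_le_eq_union, interior_setOf_shiftedEsymm_le (by norm_num),
    ← image_potentialGrad_openTriangle, g_eqOn.image_eq]
  refine ⟨injOn_potentialGrad.congr g_eqOn.symm, rfl, fun y hy ↦ ?_⟩
  obtain ⟨e, he⟩ := exists_continuousLinearEquiv_of_pairing_ne_zero dotProd (potentialHess y)
    fun v hv ↦ (dotProd_potentialHess_neg hy hv).ne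
  exact ⟨e, he ▸ (hasFDerivAt_potentialGrad hy).congr_of_eventuallyEq
    (g_eqOn.eventuallyEq_of_mem (isOpen_openTriangle.mem_nhds hy))⟩
end

section
/- Let 0 < b ≤ a ≤ π/2. Then the function t ↦ sin(at)/sin(bt) is differentiable on (0,1) with non-positive derivative there; equivalently, t ↦ sin(at)/sin(bt) is antitone (non-increasing) on (0,1). -/
open Real

/-!
By the quotient rule the sign of the derivative is that of `x cos x sin y - y cos y sin x` at
`x = a t`, `y = b t`. Twice this expression is `(x - y) sin (x + y) - (x + y) sin (x - y)`, so it is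
nonpositive precisely when `sinc (x + y) ≤ sinc (x - y)` (for `y < x`). This comparison holds
because `sinc` decreases on `[0, π]`, by concavity of `sin`, and is nonpositive on `[π, 2π]`.
-/

lemma mul_sinc (x : ℝ) : x * sinc x = sin x := by
  rcases eq_or_ne x 0 with rfl | hx
  · simp
  · rw [sinc_of_ne_zero hx, mul_div_cancel₀ _ hx]

lemma antitoneOn_sinc_Icc : AntitoneOn sinc (Set.Icc 0 π) := by
  intro v hv u hu hvu
  rcases hv.1.eq_or_lt with rfl | hv_pos
  · simpa only [sinc_zero] using sinc_le_one u
  have hu_pos : 0 < u := hv_pos.trans_le hvu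
  have hslope : slope sin 0 u ≤ slope sin 0 v :=
    strictConcaveOn_sin_Icc.concaveOn.slope_anti (Set.left_mem_Icc.2 pi_nonneg)
      ⟨hv, hv_pos.ne'⟩ ⟨hu, hu_pos.ne'⟩ hvu
  simpa only [slope_def_field, sin_zero, sub_zero, sinc_of_ne_zero hv_pos.ne',
    sinc_of_ne_zero hu_pos.ne'] using hslope

lemma sinc_nonneg_of_nonneg_of_le_pi {x : ℝ} (hx : 0 ≤ x) (hxπ : x ≤ π) : 0 ≤ sinc x := by
  rcases hx.eq_or_lt with rfl | hx_pos
  · simp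
  · rw [sinc_of_ne_zero hx_pos.ne']
    exact div_nonneg (sin_nonneg_of_nonneg_of_le_pi hx hxπ) hx

lemma sinc_nonpos_of_pi_le_of_le_two_pi {x : ℝ} (hπx : π ≤ x) (hx : x ≤ 2 * π) : sinc x ≤ 0 := by
  have hx_pos : 0 < x := pi_pos.trans_le hπx
  have hsin : 0 ≤ sin (x - π) := sin_nonneg_of_nonneg_of_le_pi (by linarith) (by linarith)
  rw [sin_sub_pi, neg_nonneg] at hsin
  rw [sinc_of_ne_zero hx_pos.ne']
  exact div_nonpos_of_nonpos_of_nonneg hsin hx_pos.le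

lemma sinc_le_sinc_of_le_two_pi {u v : ℝ} (hv : 0 ≤ v) (hvu : v ≤ u) (hvπ : v ≤ π)
    (hu : u ≤ 2 * π) : sinc u ≤ sinc v := by
  rcases le_total u π with huπ | hπu
  · exact antitoneOn_sinc_Icc ⟨hv, hvπ⟩ ⟨hv.trans hvu, huπ⟩ hvu
  · exact (sinc_nonpos_of_pi_le_of_le_two_pi hπu hu).trans (sinc_nonneg_of_nonneg_of_le_pi hv hvπ)

lemma mul_cos_mul_sin_le_mul_cos_mul_sin {x y : ℝ} (hy : 0 ≤ y) (hyx : y ≤ x) (hsub : x - y ≤ π)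
    (hadd : x + y ≤ 2 * π) : x * cos x * sin y ≤ y * cos y * sin x := by
  have hsub_nonneg : 0 ≤ x - y := sub_nonneg.2 hyx
  have hadd_nonneg : 0 ≤ x + y := by linarith
  have hsinc : sinc (x + y) ≤ sinc (x - y) :=
    sinc_le_sinc_of_le_two_pi hsub_nonneg (by linarith) hsub hadd
  have hsin : (x - y) * sin (x + y) ≤ (x + y) * sin (x - y) := calc
    (x - y) * sin (x + y) = (x - y) * (x + y) * sinc (x + y) := by rw [mul_assoc, mul_sinc]
    _ ≤ (x - y) * (x + y) * sinc (x - y) := by gcongr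
    _ = (x + y) * sin (x - y) := by rw [← mul_sinc (x - y)]; ring
  rw [sin_add, sin_sub] at hsin
  linarith

section SinQuotient

variable {a b t : ℝ}

lemma hasDerivAt_sin_mul_div_sin_mul (hsin : sin (b * t) ≠ 0) :
    HasDerivAt (fun t => sin (a * t) / sin (b * t))
      ((a * cos (a * t) * sin (b * t) - b * cos (b * t) * sin (a * t)) / sin (b * t) ^ 2) t := by
  have hderiv (c : ℝ) : HasDerivAt (fun t => sin (c * t)) (c * cos (c * t)) t := by
    simpa only [id_eq, mul_one, mul_comm] using ((hasDerivAt_id t).const_mul c).sin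
  exact ((hderiv a).fun_div (hderiv b) hsin).congr_deriv (by ring)

lemma deriv_sin_mul_div_sin_mul_nonpos (ht : 0 < t) (hb : 0 ≤ b) (hba : b ≤ a)
    (hsub : (a - b) * t ≤ π) (hadd : (a + b) * t ≤ 2 * π) (hsin : sin (b * t) ≠ 0) :
    deriv (fun t => sin (a * t) / sin (b * t)) t ≤ 0 := by
  have hmul : t * (a * cos (a * t) * sin (b * t) - b * cos (b * t) * sin (a * t)) ≤ 0 := by
    have h : a * t * cos (a * t) * sin (b * t) ≤ b * t * cos (b * t) * sin (a * t) :=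
      mul_cos_mul_sin_le_mul_cos_mul_sin (by positivity) (by gcongr) (by linarith) (by linarith)
    linarith
  rw [(hasDerivAt_sin_mul_div_sin_mul hsin).deriv]
  exact div_nonpos_of_nonpos_of_nonneg (nonpos_of_mul_nonpos_right hmul ht) (sq_nonneg _)

end SinQuotient

theorem stmt_13_general (a b : ℝ) (hb : 0 < b) (hba : b ≤ a) (hsub : a - b ≤ π)
    (hadd : a + b ≤ 2 * π) :
    (∀ t ∈ Set.Ioo (0:ℝ) 1,
      DifferentiableAt ℝ (fun t => sin (a * t) / sin (b * t)) t ∧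
      deriv (fun t => sin (a * t) / sin (b * t)) t ≤ 0) ∧
    AntitoneOn (fun t => sin (a * t) / sin (b * t)) (Set.Ioo (0:ℝ) 1) := by
  have hderiv : ∀ t ∈ Set.Ioo (0:ℝ) 1,
      DifferentiableAt ℝ (fun t => sin (a * t) / sin (b * t)) t ∧
      deriv (fun t => sin (a * t) / sin (b * t)) t ≤ 0 := by
    rintro t ⟨ht_pos, ht_lt⟩
    have hbt : b * t < π := (mul_lt_of_lt_one_right hb ht_lt).trans_le (by linarith)
    have hsin : sin (b * t) ≠ 0 := (sin_pos_of_pos_of_lt_pi (by positivity) hbt).ne'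
    have hsub_t : (a - b) * t ≤ π :=
      (mul_le_of_le_one_right (sub_nonneg.2 hba) ht_lt.le).trans hsub
    have hadd_t : (a + b) * t ≤ 2 * π :=
      (mul_le_of_le_one_right (by linarith) ht_lt.le).trans hadd
    exact ⟨(hasDerivAt_sin_mul_div_sin_mul hsin).differentiableAt,
      deriv_sin_mul_div_sin_mul_nonpos ht_pos hb.le hba hsub_t hadd_t hsin⟩
  refine ⟨hderiv, antitoneOn_of_deriv_nonpos (convex_Ioo 0 1)
    (fun t ht => (hderiv t ht).1.continuousAt.continuousWithinAt) ?_ ?_⟩ <;> rw [interior_Ioo]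
  · exact fun t ht => (hderiv t ht).1.differentiableWithinAt
  · exact fun t ht => (hderiv t ht).2

theorem stmt_13 (a b : ℝ) (hb : 0 < b) (hba : b ≤ a) (ha : a ≤ π/2) :
    (∀ t ∈ Set.Ioo (0:ℝ) 1,
      DifferentiableAt ℝ (fun t => sin (a * t) / sin (b * t)) t ∧
      deriv (fun t => sin (a * t) / sin (b * t)) t ≤ 0) ∧
    AntitoneOn (fun t => sin (a * t) / sin (b * t)) (Set.Ioo (0:ℝ) 1) :=
  stmt_13_general a b hb hba (by linarith [pi_pos]) (by linarith [pi_pos])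
end
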